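/- arXiv:2402.11876 — 2 statements merged into one kernel-verified Lean document; each statement's English description precedes it below -/
import Mathlib

section
/- Let ρ_m < ρ₁ be real numbers, let K ≥ 0, M ≥ 0, L_f ≥ 0, Y ≥ 0 be constants, let R : [0, ∞) → [0, ∞) be continuous, and let u : [0, ∞) → [0, ∞) be continuous. Assume that for all t ≥ 0, u(t) ≤ K e^{ρ_m t} Y + M ∫₀ᵗ (R(s) + L_f) e^{ρ₁ (t−s)} u(s) ds. Then for all t ≥ 0, u(t) ≤ [ K e^{ρ_m t} + (K M / √(2(ρ₁ − ρ_m))) · e^{(M L_f + ρ₁) t + M ∫₀ᵗ R(s) ds + ∫₀ᵗ R(s)² ds} + (K M L_f / (ρ₁ − ρ_m)) · e^{(M L_f + ρ₁) t + M ∫₀ᵗ R(s) ds} ] · Y. -/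
theorem aux_ftc (f : ℝ → ℝ) (hf : Continuous f) (t : ℝ) :
    HasDerivAt (fun t => ∫ s in (0:ℝ)..t, f s) (f t) t :=
  intervalIntegral.integral_hasDerivAt_right (hf.intervalIntegrable _ _)
    (hf.stronglyMeasurableAtFilter _ _) hf.continuousAt

theorem aux_main (ρm ρ₁ : ℝ) (hρ : ρm < ρ₁) (K M Lf Y : ℝ)
    (hK : 0 ≤ K) (hM : 0 ≤ M) (hLf : 0 ≤ Lf) (hY : 0 ≤ Y)
    (R u : ℝ → ℝ)
    (hRc : Continuous R) (hRnn : ∀ t, 0 ≤ R t)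
    (huc : Continuous u)
    (h : ∀ t, 0 ≤ t →
      u t ≤ K * Real.exp (ρm * t) * Y
        + M * ∫ s in (0:ℝ)..t, (R s + Lf) * Real.exp (ρ₁ * (t - s)) * u s) :
    ∀ t, 0 ≤ t →
      u t ≤ (K * Real.exp (ρm * t)
        + (K * M / Real.sqrt (2 * (ρ₁ - ρm))) *
            Real.exp ((M * Lf + ρ₁) * t + M * (∫ s in (0:ℝ)..t, R s)
              + ∫ s in (0:ℝ)..t, (R s) ^ 2)
        + (K * M * Lf / (ρ₁ - ρm)) *
            Real.exp ((M * Lf + ρ₁) * t + M * ∫ s in (0:ℝ)..t, R s)) * Y := by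
  obtain ⟨δ, hδ⟩ : ∃ δ, δ = ρ₁ - ρm := ⟨_, rfl⟩
  have hδ0 : 0 < δ := by linarith
  rw [← hδ]
  obtain ⟨q, hq⟩ : ∃ q, q = Real.sqrt (2 * δ) := ⟨_, rfl⟩
  have hq0 : 0 < q := by rw [hq]; positivity
  have hq2 : q ^ 2 = 2 * δ := by rw [hq]; exact Real.sq_sqrt (by positivity)
  rw [← hq]
  obtain ⟨W, hW⟩ : ∃ W : ℝ → ℝ, W = fun t => ∫ s in (0:ℝ)..t,
    (R s + Lf) * (Real.exp (-ρ₁ * s) * u s) := ⟨_, rfl⟩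
  obtain ⟨I, hI⟩ : ∃ I : ℝ → ℝ, I = fun t => ∫ s in (0:ℝ)..t, R s := ⟨_, rfl⟩
  obtain ⟨J, hJ⟩ : ∃ J : ℝ → ℝ, J = fun t => ∫ s in (0:ℝ)..t, (R s) ^ 2 := ⟨_, rfl⟩
  have hWd : ∀ t, HasDerivAt W ((R t + Lf) * (Real.exp (-ρ₁ * t) * u t)) t := fun t => by
    rw [hW]
    exact aux_ftc (fun s => (R s + Lf) * (Real.exp (-ρ₁ * s) * u s)) (by fun_prop) t
  have hId : ∀ t, HasDerivAt I (R t) t := fun t => by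
    rw [hI]; exact aux_ftc R hRc t
  have hJd : ∀ t, HasDerivAt J (R t ^ 2) t := fun t => by
    rw [hJ]; exact aux_ftc (fun s => R s ^ 2) (by fun_prop) t
  have hW0 : W 0 = 0 := by simp [hW]
  have hI0 : I 0 = 0 := by simp [hI]
  have hJ0 : J 0 = 0 := by simp [hJ]
  have hInn : ∀ t, 0 ≤ t → 0 ≤ I t := fun t ht => by
    rw [hI]; exact intervalIntegral.integral_nonneg ht (fun s _ => hRnn s)
  have hJnn : ∀ t, 0 ≤ t → 0 ≤ J t := fun t ht => by
    rw [hJ]; exact intervalIntegral.integral_nonneg ht (fun s _ => sq_nonneg _)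
  have hWeq : ∀ t, ∫ s in (0:ℝ)..t, (R s + Lf) * Real.exp (ρ₁ * (t - s)) * u s
      = Real.exp (ρ₁ * t) * W t := by
    intro t
    rw [hW]
    simp only
    rw [← intervalIntegral.integral_const_mul]
    congr 1
    funext s
    rw [show ρ₁ * (t - s) = ρ₁ * t + -ρ₁ * s by ring, Real.exp_add]
    ring
  simp only [hWeq] at h
  have hIe : ∀ t, ∫ s in (0:ℝ)..t, R s = I t := fun t => by rw [hI]
  have hJe : ∀ t, ∫ s in (0:ℝ)..t, (R s) ^ 2 = J t := fun t => by rw [hJ]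
  simp only [hIe, hJe]
  clear hIe hJe hWeq
  -- v bound
  have hv : ∀ t, 0 ≤ t → Real.exp (-ρ₁ * t) * u t ≤ K * Y * Real.exp (-δ * t) + M * W t := by
    intro t ht
    have h1 := mul_le_mul_of_nonneg_left (h t ht) (Real.exp_pos (-ρ₁ * t)).le
    have e1 : Real.exp (-ρ₁ * t) * Real.exp (ρm * t) = Real.exp (-δ * t) := by
      rw [← Real.exp_add]; congr 1; rw [hδ]; ring
    have e2 : Real.exp (-ρ₁ * t) * Real.exp (ρ₁ * t) = 1 := by
      rw [← Real.exp_add]; simp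
    calc _ ≤ _ := h1
      _ = K * Y * (Real.exp (-ρ₁ * t) * Real.exp (ρm * t))
          + M * W t * (Real.exp (-ρ₁ * t) * Real.exp (ρ₁ * t)) := by ring
      _ = _ := by rw [e1, e2]; ring
  obtain ⟨F, hF⟩ : ∃ F : ℝ → ℝ, F = fun t => K * Y * (1 / q * ((J t - Real.exp (-(2 * δ) * t)) / 2)
    + Lf / δ * (-Real.exp (-δ * t))) - W t * Real.exp (-(M * (I t + Lf * t))) := ⟨_, rfl⟩
  have hexp : ∀ c t : ℝ, HasDerivAt (fun t => Real.exp (c * t)) (Real.exp (c * t) * c) t :=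
    fun c t => by simpa using ((hasDerivAt_id t).const_mul c).exp
  have hFd : ∀ t, HasDerivAt F (K * Y * (1 / q * ((R t ^ 2 - Real.exp (-(2 * δ) * t) * (-(2 * δ))) / 2)
    + Lf / δ * (-(Real.exp (-δ * t) * (-δ)))) - ((R t + Lf) * (Real.exp (-ρ₁ * t) * u t) *
      Real.exp (-(M * (I t + Lf * t))) + W t * (Real.exp (-(M * (I t + Lf * t))) *
        (-(M * (R t + Lf * 1)))))) t := by
    intro t
    rw [hF]
    exact (((((hJd t).sub (hexp _ t)).div_const 2).const_mul (1 / q)).add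
      ((hexp _ t).neg.const_mul (Lf / δ))).const_mul (K * Y) |>.sub
      ((hWd t).mul (((hId t).add ((hasDerivAt_id t).const_mul Lf)).const_mul M).neg.exp)
  have hFmono : MonotoneOn F (Set.Ici 0) := by
    apply monotoneOn_of_deriv_nonneg (convex_Ici 0)
    · exact fun t _ => (hFd t).continuousAt.continuousWithinAt
    · exact fun t _ => (hFd t).differentiableAt.differentiableWithinAt
    · intro t ht
      rw [interior_Ici] at ht
      have ht0 : 0 ≤ t := le_of_lt ht
      rw [(hFd t).deriv]
      have hv' := hv t ht0
      have hR := hRnn t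
      have hE1 : Real.exp (-(M * (I t + Lf * t))) ≤ 1 := by
        apply Real.exp_le_one_iff.2
        have := hInn t ht0
        have : 0 ≤ M * (I t + Lf * t) := by positivity
        linarith
      have hE0 := Real.exp_pos (-(M * (I t + Lf * t)))
      have hes : Real.exp (-(2 * δ) * t) = Real.exp (-δ * t) ^ 2 := by
        rw [← Real.exp_nat_mul]; congr 1; push_cast; ring
      rw [hes]
      generalize Real.exp (-(M * (I t + Lf * t))) = E at *
      have hx := Real.exp_pos (-δ * t)
      generalize Real.exp (-δ * t) = x at *
      generalize Real.exp (-ρ₁ * t) * u t = v at *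
      have s1 : R t * x ≤ 1 / q * ((R t ^ 2 - x ^ 2 * (-(2 * δ))) / 2) := by
        rw [← hq2, one_div, ← div_eq_inv_mul, le_div_iff₀ hq0]
        nlinarith [sq_nonneg (R t - q * x)]
      have s2 : Lf / δ * (-(x * (-δ))) = Lf * x := by field_simp
      rw [s2]
      have s3 : (R t + Lf) * E * (v - M * W t) ≤ (R t + Lf) * E * (K * Y * x) :=
        mul_le_mul_of_nonneg_left (by linarith) (by positivity)
      have s4 : (R t + Lf) * (K * Y * x) * E ≤ (R t + Lf) * (K * Y * x) * 1 :=
        mul_le_mul_of_nonneg_left hE1 (by positivity)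
      have s5 := mul_le_mul_of_nonneg_left s1 (mul_nonneg hK hY)
      linarith
  intro t ht
  have hF0 := hFmono (Set.mem_Ici.2 le_rfl) (Set.mem_Ici.2 ht) ht
  rw [hF] at hF0
  simp only [hJ0, hW0, hI0, mul_zero, Real.exp_zero, zero_mul] at hF0
  have hE : Real.exp (-(M * (I t + Lf * t))) * Real.exp (M * (I t + Lf * t)) = 1 := by
    rw [← Real.exp_add]; simp
  have hg : W t * Real.exp (-(M * (I t + Lf * t))) ≤
      K * Y * (1 / q * Real.exp (J t) + Lf / δ) := by
    have a1 : (J t - Real.exp (-(2 * δ) * t)) / 2 + 1 / 2 ≤ Real.exp (J t) := by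
      have := Real.add_one_le_exp (J t)
      have := hJnn t ht
      have := Real.exp_pos (-(2 * δ) * t)
      linarith
    have a2 := mul_le_mul_of_nonneg_left a1 (show 0 ≤ K * Y * (1 / q) by positivity)
    have a3 : 0 ≤ K * Y * (Lf / δ * Real.exp (-δ * t)) := by positivity
    linarith
  have hWt : W t ≤ K * Y * (1 / q * Real.exp (J t) + Lf / δ) * Real.exp (M * (I t + Lf * t)) := by
    have := mul_le_mul_of_nonneg_right hg (Real.exp_pos (M * (I t + Lf * t))).le
    rwa [mul_assoc, hE, mul_one] at this
  have e3 : Real.exp ((M * Lf + ρ₁) * t + M * I t)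
      = Real.exp (ρ₁ * t) * Real.exp (M * (I t + Lf * t)) := by
    rw [← Real.exp_add]; congr 1; ring
  rw [Real.exp_add _ (J t), e3]
  have := mul_le_mul_of_nonneg_left hWt (show 0 ≤ M * Real.exp (ρ₁ * t) by positivity)
  refine (h t ht).trans ?_
  calc _ ≤ K * Real.exp (ρm * t) * Y + M * Real.exp (ρ₁ * t) *
        (K * Y * (1 / q * Real.exp (J t) + Lf / δ) * Real.exp (M * (I t + Lf * t))) := by linarith
    _ = _ := by ring


/-- Gronwall-type estimate with two exponents: if
`u(t) ≤ K e^{ρ_m t} Y + M ∫₀ᵗ (R(s)+L_f) e^{ρ₁(t−s)} u(s) ds` for all `t ≥ 0`, then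
`u(t) ≤ [K e^{ρ_m t} + (KM/√(2(ρ₁−ρ_m))) e^{(ML_f+ρ₁)t + M∫₀ᵗR + ∫₀ᵗR²}
        + (KML_f/(ρ₁−ρ_m)) e^{(ML_f+ρ₁)t + M∫₀ᵗR}]·Y`. -/
theorem stmt_4 (ρm ρ₁ : ℝ) (hρ : ρm < ρ₁) (K M Lf Y : ℝ)
    (hK : 0 ≤ K) (hM : 0 ≤ M) (hLf : 0 ≤ Lf) (hY : 0 ≤ Y)
    (R u : ℝ → ℝ)
    (hRc : ContinuousOn R (Set.Ici 0)) (hRnn : ∀ t, 0 ≤ t → 0 ≤ R t)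
    (huc : ContinuousOn u (Set.Ici 0)) (hunn : ∀ t, 0 ≤ t → 0 ≤ u t)
    (h : ∀ t, 0 ≤ t →
      u t ≤ K * Real.exp (ρm * t) * Y
        + M * ∫ s in (0:ℝ)..t, (R s + Lf) * Real.exp (ρ₁ * (t - s)) * u s) :
    ∀ t, 0 ≤ t →
      u t ≤ (K * Real.exp (ρm * t)
        + (K * M / Real.sqrt (2 * (ρ₁ - ρm))) *
            Real.exp ((M * Lf + ρ₁) * t + M * (∫ s in (0:ℝ)..t, R s)
              + ∫ s in (0:ℝ)..t, (R s) ^ 2)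
        + (K * M * Lf / (ρ₁ - ρm)) *
            Real.exp ((M * Lf + ρ₁) * t + M * ∫ s in (0:ℝ)..t, R s)) * Y := by
  intro t ht
  have hmax : ∀ s : ℝ, 0 ≤ s → max s 0 = s := fun s hs => max_eq_left hs
  have hcm : Continuous fun s : ℝ => max s 0 := by fun_prop
  have key := aux_main ρm ρ₁ hρ K M Lf Y hK hM hLf hY (fun s => R (max s 0)) (fun s => u (max s 0))
    (hRc.comp_continuous hcm fun s => Set.mem_Ici.2 (le_max_right _ _)) (fun s => hRnn _ (le_max_right _ _))
    (huc.comp_continuous hcm fun s => Set.mem_Ici.2 (le_max_right _ _)) ?_ t ht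
  · have e1 : ∫ s in (0:ℝ)..t, R (max s 0) = ∫ s in (0:ℝ)..t, R s := by
      apply intervalIntegral.integral_congr
      intro s hs
      rw [Set.uIcc_of_le ht] at hs
      simp only [hmax s hs.1]
    have e2 : ∫ s in (0:ℝ)..t, R (max s 0) ^ 2 = ∫ s in (0:ℝ)..t, R s ^ 2 := by
      apply intervalIntegral.integral_congr
      intro s hs
      rw [Set.uIcc_of_le ht] at hs
      simp only [hmax s hs.1]
    simp only [e1, e2, hmax t ht] at key
    exact key
  · intro r hr
    have e : ∫ s in (0:ℝ)..r, (R (max s 0) + Lf) * Real.exp (ρ₁ * (r - s)) * u (max s 0)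
        = ∫ s in (0:ℝ)..r, (R s + Lf) * Real.exp (ρ₁ * (r - s)) * u s := by
      apply intervalIntegral.integral_congr
      intro s hs
      rw [Set.uIcc_of_le hr] at hs
      simp only [hmax s hs.1]
    simp only [e, hmax r hr]
    exact h r hr
end

section
/- Let X be a real Banach space, let P : X → X be a continuous linear map with P ∘ P = P whose range is a finite-dimensional subspace of dimension m ≥ 1, let A ⊆ X, let f : X → X, and let L ≥ 0, δ ≥ 0, α > 0 be constants such that for all u, v ∈ A one has ‖P(f(u) − f(v))‖ ≤ L‖u − v‖ and ‖(f(u) − f(v)) − P(f(u) − f(v))‖ ≤ δ‖u − v‖. Suppose u₁, …, u_N ∈ A and r₁, …, r_N > 0 are such that A ⊆ ⋃_{i=1}^{N} B(u_i, 2r_i). Then there exist, for each i ∈ {1, …, N}, an integer n_i ≤ m·(2 + 4/α)^m and points u_i^1, …, u_i^{n_i} ∈ X such that f(A) ⊆ ⋃_{i=1}^{N} ⋃_{j=1}^{n_i} B(u_i^j, (αL + 2δ) r_i). -/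
open MeasureTheory Metric Module Set in
theorem aux_card {E : Type*} [NormedAddCommGroup E] [NormedSpace ℝ E] [FiniteDimensional ℝ E]
    (α : ℝ) (hα : 0 < α) (s : Finset E) (hs : ∀ c ∈ s, ‖c‖ ≤ 2)
    (h : ∀ c ∈ s, ∀ d ∈ s, c ≠ d → α ≤ ‖c - d‖) :
    (s.card : ℝ) ≤ (1 + 4 / α) ^ finrank ℝ E := by
  borelize E
  let μ : Measure E := Measure.addHaar
  have δpos : 0 < α / 2 := by positivity
  have ρpos : 0 < α / 2 + 2 := by positivity
  have D : Set.Pairwise (s : Set E) (Function.onFun Disjoint fun c => ball (c : E) (α / 2)) := by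
    rintro c hc d hd hcd
    apply ball_disjoint_ball
    rw [dist_eq_norm]
    have := h c hc d hd hcd
    linarith
  have A_subset : (⋃ c ∈ s, ball (c : E) (α / 2)) ⊆ ball (0 : E) (α / 2 + 2) := by
    refine iUnion₂_subset fun x hx => ?_
    apply ball_subset_ball'
    rw [dist_zero_right]
    exact add_le_add le_rfl (hs x hx)
  have I : (s.card : ENNReal) * ENNReal.ofReal ((α / 2) ^ finrank ℝ E) * μ (ball 0 1) ≤
      ENNReal.ofReal ((α / 2 + 2) ^ finrank ℝ E) * μ (ball 0 1) :=
    calc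
      _ = μ (⋃ c ∈ s, ball (c : E) (α / 2)) := by
        rw [measure_biUnion_finset D fun c _ => measurableSet_ball]
        simp only [μ.addHaar_ball_of_pos _ δpos]
        simp only [Finset.sum_const, nsmul_eq_mul, mul_assoc]
      _ ≤ μ (ball (0 : E) (α / 2 + 2)) := measure_mono A_subset
      _ = _ := by simp only [μ.addHaar_ball_of_pos _ ρpos]
  have J := (ENNReal.mul_le_mul_iff_left (measure_ball_pos μ _ zero_lt_one).ne'
    measure_ball_lt_top.ne).1 I
  have K := ENNReal.toReal_le_of_le_ofReal (pow_nonneg ρpos.le _) J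
  rw [ENNReal.toReal_mul, ENNReal.toReal_natCast, ENNReal.toReal_ofReal (by positivity)] at K
  have e : α / 2 + 2 = (1 + 4 / α) * (α / 2) := by field_simp; ring
  rw [e, mul_pow] at K
  exact le_of_mul_le_mul_right K (by positivity)

theorem aux_cover {E : Type*} [NormedAddCommGroup E] [NormedSpace ℝ E] [FiniteDimensional ℝ E]
    (α : ℝ) (hα : 0 < α) : ∃ s : Finset E,
      (s.card : ℝ) ≤ (1 + 4 / α) ^ Module.finrank ℝ E ∧
      ∀ x : E, ‖x‖ ≤ 2 → ∃ c ∈ s, ‖x - c‖ ≤ α := by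
  classical
  let K : Set ℕ := {k | ∃ s : Finset E, s.card = k ∧ (∀ c ∈ s, ‖c‖ ≤ 2) ∧
    ∀ c ∈ s, ∀ d ∈ s, c ≠ d → α ≤ ‖c - d‖}
  have hne : K.Nonempty := ⟨0, ∅, by simp⟩
  have hb : BddAbove K := by
    refine ⟨⌊(1 + 4 / α) ^ Module.finrank ℝ E⌋₊, ?_⟩
    rintro k ⟨s, rfl, h1, h2⟩
    exact Nat.le_floor (aux_card α hα s h1 h2)
  obtain ⟨s, hs, h1, h2⟩ := Nat.sSup_mem hne hb
  refine ⟨s, aux_card α hα s h1 h2, fun x hx => ?_⟩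
  by_contra! hc
  have hxs : x ∉ s := fun h => by have := hc x h; simp at this; linarith
  have : s.card + 1 ∈ K := by
    refine ⟨insert x s, Finset.card_insert_of_notMem hxs, ?_, ?_⟩
    · intro c hc'
      rcases Finset.mem_insert.1 hc' with rfl | h
      exacts [hx, h1 c h]
    · intro c hc' d hd hcd
      rcases Finset.mem_insert.1 hc' with rfl | h <;> rcases Finset.mem_insert.1 hd with rfl | h'
      · exact absurd rfl hcd
      · exact (hc d h').le
      · rw [norm_sub_rev]; exact (hc c h).le
      · exact h2 c h d h' hcd
  have := le_csSup hb this
  omega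


/-- Squeezing + covering step: if `P` is a finite-rank projection of rank `m ≥ 1`,
`f` satisfies `‖P(f u − f v)‖ ≤ L‖u−v‖` and `‖(I−P)(f u − f v)‖ ≤ δ‖u−v‖` on `A`, and
`A ⊆ ⋃ᵢ B(uᵢ, 2rᵢ)` with `uᵢ ∈ A`, `rᵢ > 0`, then `f(A)` can be covered by
`⋃ᵢ⋃ⱼ B(uᵢʲ, (αL+2δ)rᵢ)` with at most `m(2+4/α)^m` balls for each `i`. -/
theorem stmt_7 {X : Type*} [NormedAddCommGroup X] [NormedSpace ℝ X] [CompleteSpace X]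
    (P : X →L[ℝ] X) (hproj : ∀ z : X, P (P z) = P z) (m : ℕ)
    (hrank : Module.finrank ℝ (LinearMap.range (P : X →ₗ[ℝ] X)) = m) (hm : 1 ≤ m)
    (A : Set X) (f : X → X) (L δ α : ℝ) (hL : 0 ≤ L) (hδ : 0 ≤ δ) (hα : 0 < α)
    (hPf : ∀ u ∈ A, ∀ v ∈ A, ‖P (f u - f v)‖ ≤ L * ‖u - v‖)
    (hQf : ∀ u ∈ A, ∀ v ∈ A, ‖(f u - f v) - P (f u - f v)‖ ≤ δ * ‖u - v‖)
    (N : ℕ) (u : Fin N → X) (hu : ∀ i, u i ∈ A)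
    (r : Fin N → ℝ) (hr : ∀ i, 0 < r i)
    (hcov : A ⊆ ⋃ i, Metric.closedBall (u i) (2 * r i)) :
    ∃ (n : Fin N → ℕ) (y : (i : Fin N) → Fin (n i) → X),
      (∀ i, (n i : ℝ) ≤ (m : ℝ) * (2 + 4 / α) ^ m) ∧
      f '' A ⊆ ⋃ i, ⋃ j, Metric.closedBall (y i j) ((α * L + 2 * δ) * r i) := by
  have : FiniteDimensional ℝ (LinearMap.range (P : X →ₗ[ℝ] X)) :=
    Module.finite_of_finrank_pos (by omega)
  obtain ⟨s, hs, hsc⟩ := aux_cover (E := LinearMap.range (P : X →ₗ[ℝ] X)) α hα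
  rw [hrank] at hs
  refine ⟨fun _ => s.card, fun i j => f (u i) + (L * r i) • ((s.equivFin.symm j).1 : X),
    fun i => ?_, ?_⟩
  · have h4 : 0 < 4 / α := by positivity
    have hm' : (1 : ℝ) ≤ m := by exact_mod_cast hm
    calc (s.card : ℝ) ≤ (1 + 4 / α) ^ m := hs
      _ ≤ (2 + 4 / α) ^ m := by gcongr; norm_num
      _ ≤ (m : ℝ) * (2 + 4 / α) ^ m := le_mul_of_one_le_left (by positivity) hm'
  · rintro _ ⟨v, hv, rfl⟩
    obtain ⟨i, hi⟩ := Set.mem_iUnion.1 (hcov hv)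
    rw [Metric.mem_closedBall, dist_eq_norm] at hi
    have h1 := (hPf v hv _ (hu i)).trans (mul_le_mul_of_nonneg_left hi hL)
    have h2 := (hQf v hv _ (hu i)).trans (mul_le_mul_of_nonneg_left hi hδ)
    have hri := hr i
    have key : ∃ c ∈ s, ‖P (f v - f (u i)) - (L * r i) • (c : X)‖ ≤ α * L * r i := by
      rcases hL.eq_or_lt with h0 | hLpos
      · obtain ⟨c, hc, -⟩ := hsc 0 (by simp)
        refine ⟨c, hc, ?_⟩
        rw [← h0] at h1 ⊢
        simpa using h1
      · have ht : 0 < L * r i := by positivity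
        let x : LinearMap.range (P : X →ₗ[ℝ] X) :=
          (L * r i)⁻¹ • ⟨P (f v - f (u i)), ⟨_, rfl⟩⟩
        have hx : (x : X) = (L * r i)⁻¹ • P (f v - f (u i)) := rfl
        obtain ⟨c, hc, hxc⟩ := hsc x (by
          rw [Submodule.coe_norm, hx, norm_smul, norm_inv, Real.norm_of_nonneg ht.le,
            inv_mul_le_iff₀ ht]
          linarith)
        refine ⟨c, hc, ?_⟩
        rw [Submodule.coe_norm, Submodule.coe_sub] at hxc
        have e : P (f v - f (u i)) - (L * r i) • (c : X) = (L * r i) • ((x : X) - c) := by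
          rw [smul_sub, hx, smul_inv_smul₀ ht.ne']
        rw [e, norm_smul, Real.norm_of_nonneg ht.le]
        calc _ ≤ L * r i * α := mul_le_mul_of_nonneg_left hxc ht.le
          _ = _ := by ring
    obtain ⟨c, hc, hk⟩ := key
    refine Set.mem_iUnion.2 ⟨i, Set.mem_iUnion.2 ⟨s.equivFin ⟨c, hc⟩, ?_⟩⟩
    rw [Metric.mem_closedBall, dist_eq_norm]
    beta_reduce
    rw [Equiv.symm_apply_apply]
    have e : f v - (f (u i) + (L * r i) • (c : X)) =
      (P (f v - f (u i)) - (L * r i) • (c : X)) + ((f v - f (u i)) - P (f v - f (u i))) := by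
      abel
    rw [e]
    refine (norm_add_le _ _).trans ?_
    linarith
end
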